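/- Let A and B be two semilocal Noetherian commutative rings containing a field k such that the completed tensor product A⊗̂_k B is Noetherian, with maximal ideals m_1,…,m_p of A and n_1,…,n_q of B. Then the Krull dimension of A⊗̂_k B equals the supremum over all pairs (r,s) of ht(m_r) + ht(n_s) + min(trdeg_k(A/m_r), trdeg_k(B/n_s)), where ht denotes the height of the ideal and trdeg_k the transcendence degree of the residue field over k. -/

import Mathlib

open TensorProduct

/-- The ideal `r = m ⊗ B + A ⊗ n` of `C = A ⊗[k] B`, where `m` and `n` are the Jacobson
radicals of `A` and `B` (for a local ring, the Jacobson radical is the maximal ideal). -/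
noncomputable def tensorRadical (k A B : Type*) [Field k] [CommRing A] [CommRing B]
    [Algebra k A] [Algebra k B] : Ideal (A ⊗[k] B) :=
  Ideal.map (Algebra.TensorProduct.includeLeft (R := k) (S := k) (A := A) (B := B))
      ((⊥ : Ideal A).jacobson) ⊔
    Ideal.map (Algebra.TensorProduct.includeRight (R := k) (A := A) (B := B))
      ((⊥ : Ideal B).jacobson)

/-- The completed tensor product `A ⊗̂[k] B`: the `r`-adic separated completion of
`C = A ⊗[k] B`, i.e. the inverse limit of the rings `C ⧸ r ^ i`. -/
noncomputable abbrev CompletedTensor (k A B : Type*) [Field k] [CommRing A] [CommRing B]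
    [Algebra k A] [Algebra k B] : Type _ :=
  AdicCompletion (tensorRadical k A B) (A ⊗[k] B)

/-- The height of a prime ideal: the Krull dimension of the localization at it. -/
noncomputable def primeHeight {R : Type*} [CommRing R] (P : Ideal R) [P.IsPrime] :
    WithBot ℕ∞ :=
  ringKrullDim (Localization.AtPrime P)

/-- The transcendence degree of a commutative `F`-algebra `K` (as an element of `ℕ∞`):
the supremum of the cardinalities of algebraically independent subsets of `K`. -/
noncomputable def trdeg' (F K : Type*) [CommRing F] [CommRing K] [Algebra F K] : ℕ∞ :=
  Cardinal.toENat
    (⨆ s : { s : Set K // AlgebraicIndependent F ((↑) : s → K) }, Cardinal.mk s.1)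

open Algebra.TensorProduct (includeLeft includeRight)

/-!
Let `φ : A ⊗ B → E` be the completion along `m ⊗ B + A ⊗ n`. By Artin–Rees on `A`, extended to
`A ⊗ B`, the ring `E` is flat over `A`, and symmetrically `E ⧸ M E` is flat over `B`. Given maximal
ideals `M ⊇ m` and `N ⊇ n`, the fibre `E ⧸ (M E + N E)` is the uncompleted ring `A ⧸ M ⊗ B ⧸ N`, so
two applications of the height formula for flat maps give `ht M + ht N + ht Q` for the height of the
prime of `E` corresponding to a prime `Q` of the fibre. Finally every maximal ideal of `E` lies over
such a pair, because `m E + n E` is in the Jacobson radical of `E`.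

The dimension of a fibre is Sharp's theorem: for fields `K` and `L` over `k`, the ring `K ⊗ L` has
dimension `min (trdeg K) (trdeg L)`. If `x` is a finite transcendence basis of `K`, then `K ⊗ L` is
integral over a localization of `L[X]`. Conversely, `n` independent elements of each of `K` and `L`
give a flat map `K[X₁, …, Xₙ] → K ⊗ L` with a maximal ideal, of height `n`, in its spectral image.
-/

lemma ker_tensorProduct_map {k V V' W W' : Type*} [Field k]
    [AddCommGroup V] [AddCommGroup V'] [AddCommGroup W] [AddCommGroup W']
    [Module k V] [Module k V'] [Module k W] [Module k W']
    (g : V →ₗ[k] V') (h : W →ₗ[k] W') :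
    LinearMap.ker (TensorProduct.map g h) =
      LinearMap.range (LinearMap.lTensor V (LinearMap.ker h).subtype) ⊔
        LinearMap.range (LinearMap.rTensor W (LinearMap.ker g).subtype) := by
  have hfactor : TensorProduct.map g h =
      TensorProduct.map g.range.subtype h.range.subtype ∘ₗ
        TensorProduct.map g.rangeRestrict h.rangeRestrict := by
    rw [← TensorProduct.map_comp]; rfl
  rw [hfactor, LinearMap.ker_comp_of_ker_eq_bot]
  · rw [← g.ker_rangeRestrict, ← h.ker_rangeRestrict]
    exact TensorProduct.map_ker (LinearMap.exact_subtype_ker_map _) g.surjective_rangeRestrict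
      (LinearMap.exact_subtype_ker_map _) h.surjective_rangeRestrict
  · exact LinearMap.ker_eq_bot.mpr (TensorProduct.map_injective_of_flat_flat _ _
      (Submodule.subtype_injective _) (Submodule.subtype_injective _))

section TensorIdeal

variable {k A B : Type*} [Field k] [CommRing A] [CommRing B] [Algebra k A] [Algebra k B]

variable (k) in
/-- The ideal `m ⊗ B + A ⊗ n` of `A ⊗[k] B` generated by ideals `m` of `A` and `n` of `B`. -/
noncomputable def tensorIdeal (m : Ideal A) (n : Ideal B) : Ideal (A ⊗[k] B) :=
  m.map (includeLeft : A →ₐ[k] A ⊗[k] B) ⊔ n.map (includeRight : B →ₐ[k] A ⊗[k] B)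

lemma tensorIdeal_fg {m : Ideal A} {n : Ideal B} (hm : m.FG) (hn : n.FG) :
    (tensorIdeal k m n).FG :=
  Submodule.FG.sup (Ideal.FG.map hm _) (Ideal.FG.map hn _)

lemma map_tensorIdeal {A' B' : Type*} [CommRing A'] [CommRing B'] [Algebra k A'] [Algebra k B']
    (f : A →ₐ[k] A') (g : B →ₐ[k] B') (m : Ideal A) (n : Ideal B) :
    (tensorIdeal k m n).map (Algebra.TensorProduct.map f g) =
      tensorIdeal k (m.map f) (n.map g) := by
  simp only [tensorIdeal, Ideal.map_sup, Ideal.map_mapₐ,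
    Algebra.TensorProduct.map_comp_includeLeft, Algebra.TensorProduct.map_comp_includeRight]

lemma map_comm_tensorIdeal (m : Ideal A) (n : Ideal B) :
    (tensorIdeal k m n).map (Algebra.TensorProduct.comm k A B : A ⊗[k] B →ₐ[k] B ⊗[k] A) =
      tensorIdeal k n m := by
  rw [tensorIdeal, tensorIdeal, Ideal.map_sup, Ideal.map_mapₐ, Ideal.map_mapₐ, sup_comm,
    Algebra.TensorProduct.comm_comp_includeLeft, Algebra.TensorProduct.comm_comp_includeRight]

lemma ker_tensorProduct_map_mkₐ (m : Ideal A) (n : Ideal B) :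
    RingHom.ker (Algebra.TensorProduct.map (Ideal.Quotient.mkₐ k m) (Ideal.Quotient.mkₐ k n)) =
      tensorIdeal k m n := by
  rw [Algebra.TensorProduct.map_ker _ _ (Ideal.Quotient.mkₐ_surjective k m)
    (Ideal.Quotient.mkₐ_surjective k n)]
  congr 2 <;> exact Ideal.mk_ker

lemma tensorIdeal_pow_le (m : Ideal A) (n : Ideal B) (i j : ℕ) :
    tensorIdeal k m n ^ (i + j) ≤ tensorIdeal k (m ^ i) (n ^ j) := by
  simpa only [tensorIdeal, Ideal.map_pow] using Ideal.sup_pow_add_le_pow_sup_pow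

lemma tensorIdeal_inf_map_includeLeft_le (p a : Ideal A) (q : Ideal B) :
    tensorIdeal k p q ⊓ a.map (includeLeft : A →ₐ[k] A ⊗[k] B) ≤
      (p ⊓ a).map (includeLeft : A →ₐ[k] A ⊗[k] B) ⊔
        q.map (includeRight : B →ₐ[k] A ⊗[k] B) * a.map (includeLeft : A →ₐ[k] A ⊗[k] B) := by
  rintro c ⟨hc, hca⟩
  rw [SetLike.mem_coe, ← Submodule.restrictScalars_mem k, Ideal.map_includeLeft_eq] at hca
  obtain ⟨w, rfl⟩ := hca
  have hker : w ∈ LinearMap.ker (TensorProduct.map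
      ((Ideal.Quotient.mkₐ k p).toLinearMap ∘ₗ (a.restrictScalars k).subtype)
      (Ideal.Quotient.mkₐ k q).toLinearMap) := by
    rw [SetLike.mem_coe, ← ker_tensorProduct_map_mkₐ, RingHom.mem_ker] at hc
    rw [LinearMap.mem_ker, ← hc, ← LinearMap.comp_id (Ideal.Quotient.mkₐ k q).toLinearMap,
      TensorProduct.map_comp]
    rfl
  rw [ker_tensorProduct_map, Submodule.mem_sup] at hker
  obtain ⟨_, ⟨u, rfl⟩, _, ⟨v, rfl⟩, rfl⟩ := hker
  clear hc
  rw [map_add, add_comm]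
  refine Submodule.add_mem_sup ?_ ?_
  · induction v with
    | zero => simp
    | add v₁ v₂ h₁ h₂ => simpa only [map_add] using add_mem h₁ h₂
    | tmul x b =>
      have hx : (x : A) ∈ p := Ideal.Quotient.eq_zero_iff_mem.mp x.2
      have hxb : (x : A) ⊗ₜ[k] b = (1 ⊗ₜ b) * ((x : A) ⊗ₜ 1) := by simp
      simp only [LinearMap.rTensor_tmul, Submodule.subtype_apply, hxb]
      exact Ideal.mul_mem_left _ _ (Ideal.mem_map_of_mem _ ⟨hx, x.1.2⟩)
  · induction u with
    | zero => simp
    | add u₁ u₂ h₁ h₂ => simpa only [map_add] using add_mem h₁ h₂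
    | tmul x b =>
      have hb : (b : B) ∈ q := Ideal.Quotient.eq_zero_iff_mem.mp b.2
      have hxb : (x : A) ⊗ₜ[k] (b : B) = (1 ⊗ₜ (b : B)) * ((x : A) ⊗ₜ 1) := by simp
      simp only [LinearMap.lTensor_tmul, LinearMap.rTensor_tmul, Submodule.subtype_apply, hxb]
      exact Ideal.mul_mem_mul (Ideal.mem_map_of_mem _ hb) (Ideal.mem_map_of_mem _ x.2)

lemma exists_tensorIdeal_pow_inf_map_includeLeft_le [IsNoetherianRing A] (m a : Ideal A)
    (n : Ideal B) (N : ℕ) :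
    ∃ M, tensorIdeal k m n ^ M ⊓ a.map (includeLeft : A →ₐ[k] A ⊗[k] B) ≤
      tensorIdeal k m n ^ N * a.map (includeLeft : A →ₐ[k] A ⊗[k] B) := by
  obtain ⟨l, hl⟩ := Ideal.exists_pow_inf_eq_pow_smul m a
  have hAR : m ^ (N + l) ⊓ a ≤ m ^ N * a := by
    have h := hl (N + l) (Nat.le_add_left l N)
    rw [Nat.add_sub_cancel, smul_eq_mul, Ideal.mul_top] at h
    exact h.trans_le (Ideal.mul_mono_right inf_le_right)
  refine ⟨(N + l) + N, (inf_le_inf_right _ (tensorIdeal_pow_le m n _ _)).trans ?_⟩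
  refine (tensorIdeal_inf_map_includeLeft_le _ _ _).trans (sup_le ?_ ?_)
  · refine (Ideal.map_mono hAR).trans ?_
    rw [Ideal.map_mul, Ideal.map_pow]
    exact Ideal.mul_mono_left (Ideal.pow_right_mono le_sup_left N)
  · rw [Ideal.map_pow]
    exact Ideal.mul_mono_left (Ideal.pow_right_mono le_sup_right N)

end TensorIdeal

/-- `φ : R →+* E` looks like the `r`-adic completion of `R`: it induces isomorphisms
`R ⧸ r ^ N ≃ E ⧸ (r E) ^ N`, and `r E` lies in the Jacobson radical. Completeness of `E` is not
part of the definition, so that the notion passes to quotients by extended ideals. -/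
structure IsPrecompletion {R E : Type*} [CommRing R] [CommRing E] (φ : R →+* E) (r : Ideal R) :
    Prop where
  map_le_jacobson : r.map φ ≤ (⊥ : Ideal E).jacobson
  exists_sub_mem : ∀ N e, ∃ c, e - φ c ∈ r.map φ ^ N
  comap_pow_le : ∀ N, (r.map φ ^ N).comap φ ≤ r ^ N

namespace IsPrecompletion

variable {R E R' E' : Type*} [CommRing R] [CommRing E] [CommRing R'] [CommRing E']
  {φ : R →+* E} {r : Ideal R}

lemma algebraMap_adicCompletion (hr : r.FG) :
    IsPrecompletion (algebraMap R (AdicCompletion r R)) r := by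
  have mem_pow_iff (N : ℕ) (x : AdicCompletion r R) :
      x ∈ r.map (algebraMap R (AdicCompletion r R)) ^ N ↔ AdicCompletion.eval r R N x = 0 := by
    rw [← LinearMap.mem_ker, ← AdicCompletion.pow_smul_top_eq_ker_eval hr, ← Ideal.map_pow,
      ← Submodule.restrictScalars_mem R, ← Ideal.smul_top_eq_map]
  refine ⟨?_, fun N e ↦ ?_, fun N c hc ↦ ?_⟩
  · have : IsAdicComplete (r.map (algebraMap R (AdicCompletion r R))) (AdicCompletion r R) :=
      (IsAdicComplete.map_algebraMap_iff _ _).mpr (AdicCompletion.isAdicComplete hr)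
    exact IsAdicComplete.le_jacobson_bot _
  · obtain ⟨c, hc⟩ := Submodule.mkQ_surjective _ (AdicCompletion.eval r R N e)
    refine ⟨c, ?_⟩
    rw [mem_pow_iff, map_sub, ← hc, sub_eq_zero]
    rfl
  · rw [Ideal.mem_comap, mem_pow_iff] at hc
    have hc' : c ∈ (r ^ N • ⊤ : Submodule R R) := (Submodule.Quotient.mk_eq_zero _).mp hc
    rwa [smul_eq_mul, Ideal.mul_top] at hc'

lemma bijective (h : IsPrecompletion φ ⊥) : Function.Bijective φ := by
  refine ⟨(injective_iff_map_eq_zero φ).mpr fun x hx ↦ ?_, fun e ↦ ?_⟩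
  · simpa using h.comap_pow_le 1 (show x ∈ Ideal.comap φ _ by simp [hx])
  · obtain ⟨c, hc⟩ := h.exists_sub_mem 1 e
    exact ⟨c, (sub_eq_zero.mp (by simpa [Ideal.map_bot] using hc)).symm⟩

lemma exists_mem_sub_mem (h : IsPrecompletion φ r) {a : Ideal R} {z : E} (hz : z ∈ a.map φ)
    (N : ℕ) : ∃ d ∈ a, z - φ d ∈ r.map φ ^ N := by
  induction hz using Submodule.span_induction with
  | mem _ hx =>
    obtain ⟨d, hd, rfl⟩ := hx
    exact ⟨d, hd, by simp⟩
  | zero => exact ⟨0, zero_mem _, by simp⟩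
  | add x y _ _ hx hy =>
    obtain ⟨d, hd, hxd⟩ := hx
    obtain ⟨f, hf, hyf⟩ := hy
    refine ⟨d + f, add_mem hd hf, ?_⟩
    rw [map_add, add_sub_add_comm]
    exact add_mem hxd hyf
  | smul s x _ hx =>
    obtain ⟨d, hd, hxd⟩ := hx
    obtain ⟨t, ht⟩ := h.exists_sub_mem N s
    refine ⟨t * d, Ideal.mul_mem_left _ _ hd, ?_⟩
    have hsplit : s • x - φ (t * d) = s * (x - φ d) + φ d * (s - φ t) := by
      rw [map_mul, smul_eq_mul]; ring
    rw [hsplit]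
    exact add_mem (Ideal.mul_mem_left _ _ hxd) (Ideal.mul_mem_left _ _ ht)

lemma of_surjective (h : IsPrecompletion φ r) {π : R →+* R'} (hπ : Function.Surjective π)
    {ρ : E →+* E'} (hρ : Function.Surjective ρ) {φ' : R' →+* E'}
    (hcomm : φ'.comp π = ρ.comp φ) (hker : RingHom.ker ρ ≤ (RingHom.ker π).map φ) :
    IsPrecompletion φ' (r.map π) := by
  have hcomm' (x : R) : φ' (π x) = ρ (φ x) := RingHom.congr_fun hcomm x
  have hmap (N : ℕ) : (r.map π).map φ' ^ N = (r.map φ ^ N).map ρ := by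
    rw [Ideal.map_map, hcomm, ← Ideal.map_map, Ideal.map_pow]
  refine ⟨?_, fun N e ↦ ?_, fun N c hc ↦ ?_⟩
  · rw [← pow_one ((r.map π).map φ'), hmap, pow_one]
    refine (Ideal.map_mono h.map_le_jacobson).trans (Ideal.map_le_iff_le_comap.mpr fun x hx ↦ ?_)
    rw [Ideal.mem_comap, Ideal.mem_jacobson_bot, hρ.forall]
    intro y
    simpa using (Ideal.mem_jacobson_bot.mp hx y).map ρ
  · obtain ⟨e, rfl⟩ := hρ e
    obtain ⟨c, hc⟩ := h.exists_sub_mem N e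
    refine ⟨π c, ?_⟩
    rw [hcomm', ← map_sub, hmap]
    exact Ideal.mem_map_of_mem _ hc
  · obtain ⟨c, rfl⟩ := hπ c
    rw [Ideal.mem_comap, hcomm', hmap, Ideal.mem_map_iff_of_surjective _ hρ] at hc
    obtain ⟨e, he, hec⟩ := hc
    have hce : φ c - e ∈ (RingHom.ker π).map φ := hker (by simp [RingHom.mem_ker, hec])
    obtain ⟨d, hd, hced⟩ := h.exists_mem_sub_mem hce N
    have hcd : φ (c - d) ∈ r.map φ ^ N := by
      rw [show φ (c - d) = (φ c - e - φ d) + e by rw [map_sub]; ring]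
      exact add_mem hced he
    have hπcd : π (c - d) = π c := by rw [map_sub, (RingHom.mem_ker).mp hd, sub_zero]
    rw [← hπcd, ← Ideal.map_pow]
    exact Ideal.mem_map_of_mem _ (h.comap_pow_le N hcd)

lemma exists_quotient (h : IsPrecompletion φ r) {π : R →+* R'} (hπ : Function.Surjective π) :
    ∃ φ' : R' →+* E ⧸ (RingHom.ker π).map φ,
      φ'.comp π = (Ideal.Quotient.mk _).comp φ ∧ IsPrecompletion φ' (r.map π) := by
  have hker : RingHom.ker π ≤ RingHom.ker ((Ideal.Quotient.mk ((RingHom.ker π).map φ)).comp φ) :=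
    fun x hx ↦ Ideal.Quotient.eq_zero_iff_mem.mpr (Ideal.mem_map_of_mem φ hx)
  have hcomm := RingHom.liftOfRightInverse_comp π _ (Function.rightInverse_surjInv hπ) ⟨_, hker⟩
  exact ⟨_, hcomm, h.of_surjective hπ Ideal.Quotient.mk_surjective hcomm Ideal.mk_ker.le⟩

end IsPrecompletion

section IdealMul

variable {A : Type*} [CommRing A] (S : Type*) [CommRing S] [Algebra A S] (a : Ideal A)

/-- The multiplication map `S ⊗[A] a → S` of an ideal `a`, whose injectivity for all `a` is
flatness of the `A`-algebra `S`. -/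
noncomputable def idealMul : S ⊗[A] a →ₗ[S] S :=
  (TensorProduct.AlgebraTensorModule.rid A S S).toLinearMap ∘ₗ a.subtype.baseChange S

@[simp]
lemma idealMul_tmul (s : S) (x : a) : idealMul S a (s ⊗ₜ x) = algebraMap A S x * s := by
  simp [idealMul, Algebra.smul_def]

lemma idealMul_injective_iff :
    Function.Injective (idealMul S a) ↔ Function.Injective (a.subtype.lTensor S) :=
  (TensorProduct.AlgebraTensorModule.rid A S S).injective.of_comp_iff _

lemma idealMul_injective [Module.Flat A S] : Function.Injective (idealMul S a) :=
  (idealMul_injective_iff S a).mpr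
    (Module.Flat.lTensor_preserves_injective_linearMap _ a.subtype_injective)

lemma flat_of_idealMul_injective (h : ∀ a : Ideal A, Function.Injective (idealMul S a)) :
    Module.Flat A S :=
  Module.Flat.iff_lTensor_injective'.mpr fun a ↦ (idealMul_injective_iff S a).mp (h a)

lemma range_idealMul : LinearMap.range (idealMul S a) = a.map (algebraMap A S) := by
  apply le_antisymm
  · rintro _ ⟨w, rfl⟩
    induction w with
    | zero => simp
    | add x y hx hy => simpa only [map_add] using add_mem hx hy
    | tmul s x =>
      rw [idealMul_tmul]
      exact Ideal.mul_mem_right _ _ (Ideal.mem_map_of_mem _ x.2)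
  · exact Ideal.map_le_iff_le_comap.mpr fun x hx ↦ ⟨1 ⊗ₜ ⟨x, hx⟩, by simp⟩

lemma map_idealMul_smul_top (J : Ideal S) :
    (J • (⊤ : Submodule S (S ⊗[A] a))).map (idealMul S a) = J * a.map (algebraMap A S) := by
  rw [Submodule.map_smul'', Submodule.map_top, range_idealMul, smul_eq_mul]

variable {S a} in
lemma mem_smul_top_of_idealMul_mem [Module.Flat A S] {I J : Ideal S}
    (hIJ : I ⊓ a.map (algebraMap A S) ≤ J * a.map (algebraMap A S)) {w : S ⊗[A] a}
    (hw : idealMul S a w ∈ I) : w ∈ J • (⊤ : Submodule S (S ⊗[A] a)) := by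
  have hmem : idealMul S a w ∈ a.map (algebraMap A S) := range_idealMul S a ▸ ⟨w, rfl⟩
  have := hIJ ⟨hw, hmem⟩
  rw [← map_idealMul_smul_top] at this
  obtain ⟨w', hw', hww'⟩ := this
  rwa [← idealMul_injective S a hww']

end IdealMul

namespace IsPrecompletion

variable {A R E : Type*} [CommRing A] [CommRing R] [CommRing E] {r : Ideal R}

lemma exists_sub_rTensor_mem_smul_top [Algebra A R] [Algebra R E] [Algebra A E]
    [IsScalarTower A R E] (h : IsPrecompletion (algebraMap R E) r) {P : Type*} [AddCommGroup P]
    [Module A P] (N : ℕ) (u : E ⊗[A] P) :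
    ∃ w : R ⊗[A] P, u - TensorProduct.AlgebraTensorModule.rTensor A P (Algebra.linearMap R E) w ∈
      r.map (algebraMap R E) ^ N • (⊤ : Submodule E (E ⊗[A] P)) := by
  induction u with
  | zero => exact ⟨0, by simp⟩
  | add u v hu hv =>
    obtain ⟨c, hc⟩ := hu
    obtain ⟨d, hd⟩ := hv
    refine ⟨c + d, ?_⟩
    rw [map_add, add_sub_add_comm]
    exact add_mem hc hd
  | tmul e x =>
    obtain ⟨c, hc⟩ := h.exists_sub_mem N e
    refine ⟨c ⊗ₜ x, ?_⟩
    have hsub : e ⊗ₜ[A] x - algebraMap R E c ⊗ₜ x = (e - algebraMap R E c) • 1 ⊗ₜ x := by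
      rw [← sub_tmul, smul_tmul', smul_eq_mul, mul_one]
    rw [TensorProduct.AlgebraTensorModule.rTensor_tmul, Algebra.linearMap_apply, hsub]
    exact Submodule.smul_mem_smul hc trivial

lemma rTensor_mem_map_pow_smul_top [Algebra A R] [Algebra R E] [Algebra A E] [IsScalarTower A R E]
    {P : Type*} [AddCommGroup P] [Module A P] {N : ℕ} {w : R ⊗[A] P}
    (hw : w ∈ r ^ N • (⊤ : Submodule R (R ⊗[A] P))) :
    TensorProduct.AlgebraTensorModule.rTensor A P (Algebra.linearMap R E) w ∈
      r.map (algebraMap R E) ^ N • (⊤ : Submodule E (E ⊗[A] P)) := by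
  induction hw using Submodule.smul_induction_on' with
  | smul c hc z _ =>
    rw [map_smul, ← algebraMap_smul E c, ← Ideal.map_pow]
    exact Submodule.smul_mem_smul (Ideal.mem_map_of_mem _ hc) trivial
  | add x _ y _ hx hy => simpa only [map_add] using add_mem hx hy

theorem flat_comp {φ : R →+* E} (h : IsPrecompletion φ r) [IsNoetherianRing A]
    [IsNoetherianRing E] {f : A →+* R} (hf : f.Flat)
    (hAR : ∀ (a : Ideal A) (N : ℕ), ∃ M, r ^ M ⊓ a.map f ≤ r ^ N * a.map f) :
    (φ.comp f).Flat := by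
  algebraize [f, φ, φ.comp f]
  refine flat_of_idealMul_injective E fun a ↦ (injective_iff_map_eq_zero _).mpr fun u hu ↦ ?_
  set I := r.map φ
  let ψ := TensorProduct.AlgebraTensorModule.rTensor A a (Algebra.linearMap R E)
  have idealMul_ψ (w : R ⊗[A] a) : idealMul E a (ψ w) = φ (idealMul R a w) := by
    induction w with
    | zero => simp
    | add x y hx hy => simp only [map_add, hx, hy]
    | tmul c x => simp [ψ, RingHom.algebraMap_toAlgebra]
  -- Krull's intersection theorem reduces `u = 0` to `u ∈ I ^ N` for all `N`. An approximation `w`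
  -- of `u` over `R` has small image in `R`, so by Artin–Rees `w` itself is small.
  suffices hu_mem : ∀ N, u ∈ I ^ N • (⊤ : Submodule E (E ⊗[A] a)) by
    have : Module.Finite A a := Module.Finite.of_fg (IsNoetherian.noetherian a)
    rw [← Submodule.mem_bot E, ← Ideal.iInf_pow_smul_eq_bot_of_le_jacobson I h.map_le_jacobson]
    exact (Submodule.mem_iInf _).mpr hu_mem
  intro N
  obtain ⟨M, hM⟩ := hAR a N
  obtain ⟨w, hw⟩ := h.exists_sub_rTensor_mem_smul_top (M + N) u
  have hw_mem : idealMul R a w ∈ r ^ M := by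
    refine h.comap_pow_le M (Ideal.mem_comap.mpr ?_)
    have hmap : idealMul E a (u - ψ w) ∈ I ^ (M + N) :=
      (map_idealMul_smul_top E a (I ^ (M + N))).trans_le Ideal.mul_le_left ⟨_, hw, rfl⟩
    rw [map_sub, hu, zero_sub, neg_mem_iff, idealMul_ψ] at hmap
    exact Ideal.pow_le_pow_right (Nat.le_add_right M N) hmap
  rw [← sub_add_cancel u (ψ w)]
  exact add_mem (Submodule.smul_mono_left (Ideal.pow_le_pow_right (Nat.le_add_left N M)) hw)
    (rTensor_mem_map_pow_smul_top (mem_smul_top_of_idealMul_mem hM hw_mem))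

end IsPrecompletion

namespace IsPrecompletion

variable {k A B E : Type*} [Field k] [CommRing A] [CommRing B] [CommRing E] [Algebra k A]
  [Algebra k B] {m : Ideal A} {n : Ideal B} {φ : A ⊗[k] B →+* E}

lemma comp_comm (h : IsPrecompletion φ (tensorIdeal k m n)) :
    IsPrecompletion
      (φ.comp (Algebra.TensorProduct.comm k B A : B ⊗[k] A →ₐ[k] A ⊗[k] B).toRingHom)
      (tensorIdeal k n m) := by
  rw [← map_comm_tensorIdeal]
  refine h.of_surjective (π := (Algebra.TensorProduct.comm k A B).toAlgHom.toRingHom)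
    (Algebra.TensorProduct.comm k A B).surjective (ρ := RingHom.id E) Function.surjective_id ?_ ?_
  · exact RingHom.ext fun x ↦ congrArg φ ((Algebra.TensorProduct.comm k A B).symm_apply_apply x)
  · exact ((RingHom.injective_iff_ker_eq_bot _).mp Function.injective_id).trans_le bot_le

lemma flat_comp_includeLeft [IsNoetherianRing A] [IsNoetherianRing E]
    (h : IsPrecompletion φ (tensorIdeal k m n)) :
    (φ.comp (includeLeft : A →ₐ[k] A ⊗[k] B).toRingHom).Flat :=
  h.flat_comp (RingHom.flat_algebraMap_iff.mpr inferInstance)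
    fun a N ↦ exists_tensorIdeal_pow_inf_map_includeLeft_le m a n N

lemma flat_comp_includeRight [IsNoetherianRing B] [IsNoetherianRing E]
    (h : IsPrecompletion φ (tensorIdeal k m n)) :
    (φ.comp (includeRight : B →ₐ[k] A ⊗[k] B).toRingHom).Flat :=
  h.comp_comm.flat_comp_includeLeft

lemma flat_mk_comp_includeRight [IsNoetherianRing B] [IsNoetherianRing E]
    (h : IsPrecompletion φ (tensorIdeal k m n)) (I : Ideal A) :
    ((Ideal.Quotient.mk (I.map (φ.comp (includeLeft : A →ₐ[k] A ⊗[k] B).toRingHom))).comp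
      (φ.comp (includeRight : B →ₐ[k] A ⊗[k] B).toRingHom)).Flat := by
  let π := Algebra.TensorProduct.map (Ideal.Quotient.mkₐ k I) (AlgHom.id k B)
  have hπ : Function.Surjective π :=
    TensorProduct.map_surjective (Ideal.Quotient.mkₐ_surjective k I) Function.surjective_id
  have hker : (RingHom.ker π.toRingHom).map φ =
      I.map (φ.comp (includeLeft : A →ₐ[k] A ⊗[k] B).toRingHom) := by
    have hkerπ := Algebra.TensorProduct.rTensor_ker (R := k) (S := k) (C := B)
      (Ideal.Quotient.mkₐ k I) (Ideal.Quotient.mkₐ_surjective k I)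
    refine (congrArg (Ideal.map φ) hkerπ).trans ?_
    rw [← Ideal.map_map]
    exact congrArg (Ideal.map φ) (congrArg (Ideal.map _) Ideal.mk_ker)
  obtain ⟨φ', hφ', h'⟩ := h.exists_quotient (π := π.toRingHom) hπ
  rw [show (tensorIdeal k m n).map π.toRingHom = _ from map_tensorIdeal _ _ m n] at h'
  rw [← hker]
  convert h'.flat_comp_includeRight using 1
  exact (congrArg (·.comp (includeRight : B →ₐ[k] A ⊗[k] B).toRingHom) hφ').symm

lemma nonempty_quotient_ringEquiv (h : IsPrecompletion φ (tensorIdeal k m n)) {M : Ideal A}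
    {N : Ideal B} (hM : m ≤ M) (hN : n ≤ N) :
    Nonempty ((A ⧸ M) ⊗[k] (B ⧸ N) ≃+* E ⧸ (tensorIdeal k M N).map φ) := by
  let π := Algebra.TensorProduct.map (Ideal.Quotient.mkₐ k M) (Ideal.Quotient.mkₐ k N)
  have hπ : Function.Surjective π := TensorProduct.map_surjective
    (Ideal.Quotient.mkₐ_surjective k M) (Ideal.Quotient.mkₐ_surjective k N)
  have hmap : (tensorIdeal k m n).map π.toRingHom = ⊥ := by
    rw [Ideal.map_eq_bot_iff_le_ker]
    exact (sup_le_sup (Ideal.map_mono hM) (Ideal.map_mono hN)).trans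
      (ker_tensorProduct_map_mkₐ M N).ge
  obtain ⟨φ', -, h'⟩ := h.exists_quotient (π := π.toRingHom) hπ
  rw [hmap] at h'
  exact ⟨(RingEquiv.ofBijective φ' h'.bijective).trans
    (Ideal.quotEquivOfEq (congrArg (Ideal.map φ) (ker_tensorProduct_map_mkₐ M N)))⟩

end IsPrecompletion

lemma height_comap_of_flat {A E E' : Type*} [CommRing A] [CommRing E] [CommRing E']
    [IsNoetherianRing A] [IsNoetherianRing E] {f : A →+* E} (hf : f.Flat) (M : Ideal A)
    [M.IsMaximal] {ρ : E →+* E'} (hρ : Function.Surjective ρ) (hker : RingHom.ker ρ = M.map f)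
    (Q : Ideal E') [Q.IsPrime] : (Q.comap ρ).height = M.height + Q.height := by
  algebraize [f]
  let e : E ⧸ M.map f ≃+* E' :=
    (Ideal.quotEquivOfEq hker.symm).trans (RingHom.quotientKerEquivOfSurjective hρ)
  have hcomap : Q.comap ρ = (Q.comap e).comap (Ideal.Quotient.mk (M.map f)) := rfl
  have hle : M ≤ (Q.comap ρ).under A := by
    rw [Ideal.under_def, ← Ideal.map_le_iff_le_comap]
    exact hker.ge.trans (Ideal.comap_mono bot_le)
  have : (Q.comap ρ).LiesOver M :=
    ⟨Ideal.IsMaximal.eq_of_le ‹_› (Ideal.comap_isPrime (algebraMap A E) (Q.comap ρ)).ne_top hle⟩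
  rw [Ideal.height_eq_height_add_of_liesOver_of_hasGoingDown M (Q.comap ρ), hcomap,
    ← RingEquiv.height_comap e Q]
  congr 2
  exact Ideal.map_comap_of_surjective _ Ideal.Quotient.mk_surjective _

lemma height_le_add_ringKrullDim_quotient {E : Type*} [CommRing E] {I : Ideal E} {s : ℕ∞}
    (h : ∀ Q : Ideal (E ⧸ I), Q.IsPrime →
      (Q.comap (Ideal.Quotient.mk I)).height = s + Q.height)
    {P : Ideal E} [hP : P.IsPrime] (hIP : I ≤ P) :
    (P.height : WithBot ℕ∞) ≤ s + ringKrullDim (E ⧸ I) := by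
  have hQ : (P.map (Ideal.Quotient.mk I)).IsPrime :=
    Ideal.map_isPrime_of_surjective Ideal.Quotient.mk_surjective (Ideal.mk_ker.trans_le hIP)
  have hcomap : (P.map (Ideal.Quotient.mk I)).comap (Ideal.Quotient.mk I) = P := by
    rw [Ideal.comap_map_mk hIP]
  rw [← hcomap, h _ hQ, WithBot.coe_add]
  gcongr
  exact Ideal.height_le_ringKrullDim_of_ne_top hQ.ne_top

lemma add_ringKrullDim_quotient_le {E : Type*} [CommRing E] {I : Ideal E} {s : ℕ∞}
    (h : ∀ Q : Ideal (E ⧸ I), Q.IsPrime →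
      (Q.comap (Ideal.Quotient.mk I)).height = s + Q.height) :
    s + ringKrullDim (E ⧸ I) ≤ ringKrullDim E := by
  rcases subsingleton_or_nontrivial (E ⧸ I) with _ | _
  · simp [ringKrullDim_eq_bot_of_subsingleton]
  · obtain ⟨Q₀, hQ₀⟩ := Ideal.exists_maximal (E ⧸ I)
    have : Nonempty {Q : Ideal (E ⧸ I) // Q.IsPrime} := ⟨⟨Q₀, hQ₀.isPrime⟩⟩
    have : Nontrivial E := (Ideal.Quotient.mk_surjective (I := I)).nontrivial
    rw [← Ideal.sup_isPrime_height_eq_ringKrullDim, ← WithBot.coe_add, iSup_subtype',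
      ENat.add_iSup, ← Ideal.sup_isPrime_height_eq_ringKrullDim, WithBot.coe_le_coe]
    refine iSup_le fun ⟨Q, hQ⟩ ↦ ?_
    rw [← h Q hQ]
    exact le_iSup₂_of_le _ (Ideal.comap_isPrime _ _) le_rfl

lemma IsPrecompletion.height_comap_mk {k A B E : Type*} [Field k] [CommRing A] [CommRing B]
    [CommRing E] [Algebra k A] [Algebra k B] [IsNoetherianRing A] [IsNoetherianRing B]
    [IsNoetherianRing E] {m : Ideal A} {n : Ideal B} {φ : A ⊗[k] B →+* E}
    (h : IsPrecompletion φ (tensorIdeal k m n)) (M : Ideal A) (N : Ideal B) [M.IsMaximal]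
    [N.IsMaximal] (Q : Ideal (E ⧸ (tensorIdeal k M N).map φ)) [Q.IsPrime] :
    (Q.comap (Ideal.Quotient.mk _)).height = M.height + N.height + Q.height := by
  set f : A →+* E := φ.comp (includeLeft : A →ₐ[k] A ⊗[k] B).toRingHom
  set g : B →+* E := φ.comp (includeRight : B →ₐ[k] A ⊗[k] B).toRingHom
  have hsup : (tensorIdeal k M N).map φ = M.map f ⊔ N.map g := by
    rw [tensorIdeal, Ideal.map_sup]
    exact congrArg₂ _ (Ideal.map_map _ _) (Ideal.map_map _ _)
  have hle : M.map f ≤ (tensorIdeal k M N).map φ := hsup ▸ le_sup_left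
  have hker : RingHom.ker (Ideal.Quotient.factor hle) =
      N.map ((Ideal.Quotient.mk (M.map f)).comp g) := by
    rw [Ideal.Quotient.factor_ker, hsup, Ideal.map_sup, Ideal.map_quotient_self, bot_sup_eq,
      Ideal.map_map]
  calc (Q.comap (Ideal.Quotient.mk _)).height
    _ = ((Q.comap (Ideal.Quotient.factor hle)).comap (Ideal.Quotient.mk (M.map f))).height := by
      rw [Ideal.comap_comap, Ideal.Quotient.factor_comp_mk]
    _ = M.height + (Q.comap (Ideal.Quotient.factor hle)).height :=
      height_comap_of_flat h.flat_comp_includeLeft M Ideal.Quotient.mk_surjective Ideal.mk_ker _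
    _ = M.height + (N.height + Q.height) := by
      rw [height_comap_of_flat (h.flat_mk_comp_includeRight M) N
        (Ideal.Quotient.factor_surjective hle) hker]
    _ = M.height + N.height + Q.height := (add_assoc _ _ _).symm

section KrullDim

variable {R S : Type*} [CommRing R] [CommRing S]

lemma ringKrullDim_le_of_isIntegral {f : R →+* S} (hf : f.IsIntegral) :
    ringKrullDim S ≤ ringKrullDim R := by
  algebraize [f]
  exact Order.krullDim_le_of_strictMono (PrimeSpectrum.comap f)
    fun _ _ hPQ ↦ Ideal.IsIntegral.comap_lt_comap hPQ

lemma ringKrullDim_le_of_isLocalization [Algebra R S] (M : Submonoid R) [IsLocalization M S] :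
    ringKrullDim S ≤ ringKrullDim R :=
  Order.krullDim_le_of_strictMono (PrimeSpectrum.comap (algebraMap R S)) <|
    Monotone.strictMono_of_injective (fun _ _ hPQ ↦ Ideal.comap_mono hPQ)
      (PrimeSpectrum.localization_comap_injective S M)

lemma height_comap_le_height_of_flat [IsNoetherianRing R] {f : R →+* S} (hf : f.Flat)
    (Q : Ideal S) [Q.IsPrime] : (Q.comap f).height ≤ Q.height := by
  algebraize [f]
  obtain ⟨l, hl, hlen⟩ := (Q.comap f).exists_ltSeries_length_eq_height
  have : Q.LiesOver l.last.asIdeal := ⟨by rw [hl]; rfl⟩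
  obtain ⟨l', hlen', hlast, -⟩ := Ideal.exists_ltSeries_of_hasGoingDown l Q
  rw [← hlen, ← hlen', (⟨Q, ‹_›⟩ : PrimeSpectrum S).height_eq_orderHeight]
  exact Order.length_le_height hlast.le

lemma height_mvPolynomial_eq_natCard {ι F : Type*} [Finite ι] [Field F]
    (M : Ideal (MvPolynomial ι F)) [hM : M.IsMaximal] : M.height = Nat.card ι := by
  induction ι using Finite.induction_empty_option with
  | of_equiv e ih =>
    have := Ideal.comap_isMaximal_of_equiv (MvPolynomial.renameEquiv F e) (p := M)
    rw [← Nat.card_congr e, ← (MvPolynomial.renameEquiv F e).toRingEquiv.height_comap M]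
    exact ih _
  | h_empty =>
    have : IsField (MvPolynomial PEmpty F) :=
      (MvPolynomial.isEmptyRingEquiv F PEmpty).toMulEquiv.isField (Field.toIsField F)
    let := this.toField
    rw [Ideal.eq_bot_of_prime M]
    simp
  | @h_option ι _ ih =>
    let e := (MvPolynomial.optionEquivLeft F ι).symm
    have : (M.comap e).IsMaximal := Ideal.comap_isMaximal_of_equiv e
    have : ((M.comap e).comap Polynomial.C).IsMaximal :=
      Polynomial.isMaximal_comap_C_of_isJacobsonRing _
    rw [← e.toRingEquiv.height_comap M, Finite.card_option, Nat.cast_add_one,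
      ← ih ((M.comap e).comap Polynomial.C)]
    have : (M.comap e).LiesOver ((M.comap e).comap Polynomial.C) := ⟨rfl⟩
    exact Polynomial.height_eq_height_add_one ((M.comap e).comap Polynomial.C) (M.comap e)

end KrullDim

section FieldTensor

lemma isIntegral_tensorProduct_map {R A B : Type*} (C : Type*) [CommRing R] [CommRing A]
    [CommRing B] [CommRing C] [Algebra R A] [Algebra R B] [Algebra R C] {f : A →ₐ[R] B}
    (hf : f.toRingHom.IsIntegral) :
    (Algebra.TensorProduct.map f (AlgHom.id R C)).toRingHom.IsIntegral := by
  have hleft : (includeLeft : B →ₐ[R] B ⊗[R] C).toRingHom.comp f.toRingHom =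
      (Algebra.TensorProduct.map f (AlgHom.id R C)).toRingHom.comp
        (includeLeft : A →ₐ[R] A ⊗[R] C).toRingHom := by
    ext; simp
  intro z
  induction z with
  | zero => exact RingHom.isIntegralElem_zero _
  | add y z hy hz => exact hy.add _ hz
  | tmul b c =>
    rw [← mul_one b, ← one_mul c, ← Algebra.TensorProduct.tmul_mul_tmul]
    refine RingHom.IsIntegralElem.mul _ ?_ ?_
    · have hb := (hf b).map (includeLeft : B →ₐ[R] B ⊗[R] C).toRingHom
      rw [hleft] at hb
      exact hb.of_comp
    · simpa using RingHom.isIntegralElem_map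
        (Algebra.TensorProduct.map f (AlgHom.id R C)).toRingHom (x := 1 ⊗ₜ c)

lemma ringKrullDim_tensorProduct_le_natCard {k A L ι : Type*} [Field k] [CommRing A] [Field L]
    [Algebra k A] [Algebra k L] [Finite ι] {f : MvPolynomial ι k →ₐ[k] A}
    (hf : Function.Surjective f) : ringKrullDim (A ⊗[k] L) ≤ Nat.card ι := by
  have hsurj : Function.Surjective
      ((Algebra.TensorProduct.map (AlgHom.id k L) f).toRingHom.comp
        (MvPolynomial.algebraTensorAlgEquiv (σ := ι) k L).symm.toRingEquiv.toRingHom) :=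
    (LinearMap.lTensor_surjective L (g := f.toLinearMap) hf).comp (AlgEquiv.surjective _)
  calc ringKrullDim (A ⊗[k] L)
    _ = ringKrullDim (L ⊗[k] A) :=
      ringKrullDim_eq_of_ringEquiv (Algebra.TensorProduct.comm k A L).toRingEquiv
    _ ≤ ringKrullDim (MvPolynomial ι L) := ringKrullDim_le_of_surjective _ hsurj
    _ = Nat.card ι := by
      rw [MvPolynomial.ringKrullDim_of_isNoetherianRing, ringKrullDim_eq_zero_of_field, zero_add]

lemma ringKrullDim_tensorProduct_le_of_isLocalization {R A A' : Type*} (C : Type*) [CommRing R]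
    [CommRing A] [CommRing A'] [CommRing C] [Algebra R A] [Algebra R A'] [Algebra R C]
    [Algebra A A'] [IsScalarTower R A A'] (M : Submonoid A) [IsLocalization M A'] :
    ringKrullDim (A' ⊗[R] C) ≤ ringKrullDim (A ⊗[R] C) := by
  let : Algebra (A ⊗[R] C) (A' ⊗[R] C) :=
    (Algebra.TensorProduct.map (IsScalarTower.toAlgHom R A A') (AlgHom.id R C)).toAlgebra
  have : IsScalarTower A (A ⊗[R] C) (A' ⊗[R] C) := .of_algebraMap_eq fun a ↦
    (Algebra.TensorProduct.map_tmul (IsScalarTower.toAlgHom R A A') (AlgHom.id R C) a 1).symm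
  have := IsLocalization.tensorProduct_tensorProduct R C M A' <| by
    ext c
    exact (Algebra.TensorProduct.map_tmul _ _ _ _).trans (by simp)
  exact ringKrullDim_le_of_isLocalization (Algebra.algebraMapSubmonoid (A ⊗[R] C) M)

variable (k K L : Type*) [Field k] [Field K] [Field L] [Algebra k K] [Algebra k L]

open IntermediateField.algebraAdjoinAdjoin in
lemma ringKrullDim_tensorProduct_le_trdeg :
    ringKrullDim (K ⊗[k] L) ≤ (Cardinal.toENat (Algebra.trdeg k K) : ℕ∞) := by
  obtain ⟨ι, x, hx⟩ := exists_isTranscendenceBasis' k K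
  rw [← hx.cardinalMk_eq_trdeg]
  cases finite_or_infinite ι with
  | inr => simp [Cardinal.toENat_eq_top.mpr (Cardinal.aleph0_le_mk ι)]
  | inl =>
    have := hx.isAlgebraic_field
    have hint : (Algebra.TensorProduct.map (IntermediateField.adjoin k (Set.range x)).val
        (AlgHom.id k L)).toRingHom.IsIntegral :=
      isIntegral_tensorProduct_map L fun a ↦ (Algebra.IsAlgebraic.isAlgebraic a).isIntegral
    obtain ⟨f, hf⟩ : ∃ f : MvPolynomial ι k →ₐ[k] Algebra.adjoin k (Set.range x),
        Function.Surjective f := by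
      rw [Algebra.adjoin_range_eq_range_aeval]
      exact ⟨_, AlgHom.rangeRestrict_surjective _⟩
    calc ringKrullDim (K ⊗[k] L)
      _ ≤ ringKrullDim (IntermediateField.adjoin k (Set.range x) ⊗[k] L) :=
        ringKrullDim_le_of_isIntegral hint
      _ ≤ ringKrullDim (Algebra.adjoin k (Set.range x) ⊗[k] L) :=
        ringKrullDim_tensorProduct_le_of_isLocalization L (nonZeroDivisors _)
      _ ≤ Nat.card ι := ringKrullDim_tensorProduct_le_natCard hf
      _ = (Cardinal.toENat (Cardinal.mk ι) : ℕ∞) := by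
        rw [← Nat.cast_card, Cardinal.toENat_nat]; rfl

variable {k K L}

lemma exists_algebraicIndependent {n : ℕ} (hn : (n : ℕ∞) ≤ Cardinal.toENat (Algebra.trdeg k K)) :
    ∃ x : Fin n → K, AlgebraicIndependent k x := by
  obtain ⟨ι, x, hx⟩ := exists_isTranscendenceBasis' k K
  rw [← hx.cardinalMk_eq_trdeg, Cardinal.natCast_le_toENat] at hn
  obtain ⟨e⟩ := Cardinal.lift_mk_le'.mp
    (by simpa using hn : Cardinal.lift (Cardinal.mk (Fin n)) ≤ Cardinal.lift (Cardinal.mk ι))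
  exact ⟨x ∘ e, hx.1.comp e e.injective⟩

lemma flat_aeval {ι : Type*} {y : ι → L} (hy : AlgebraicIndependent k y) :
    (MvPolynomial.aeval y : MvPolynomial ι k →ₐ[k] L).toRingHom.Flat := by
  have hfrac : (MvPolynomial.aeval y : MvPolynomial ι k →ₐ[k] L).toRingHom =
      (IsFractionRing.lift (K := FractionRing (MvPolynomial ι k)) hy).comp
        (algebraMap (MvPolynomial ι k) (FractionRing (MvPolynomial ι k))) := by
    ext <;> simp
  rw [hfrac]
  refine RingHom.Flat.comp ?_ (RingHom.Flat.of_isField (Field.toIsField _) _)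
  rw [RingHom.flat_algebraMap_iff]
  exact IsLocalization.flat _ (nonZeroDivisors _)

lemma flat_aeval_one_tmul {ι : Type*} {y : ι → L} (hy : AlgebraicIndependent k y) :
    (MvPolynomial.aeval fun i ↦ (1 : K) ⊗ₜ[k] y i :
      MvPolynomial ι K →ₐ[K] K ⊗[k] L).toRingHom.Flat := by
  have hfactor : (MvPolynomial.aeval fun i ↦ (1 : K) ⊗ₜ[k] y i) =
      (Algebra.TensorProduct.lTensor (S := K) K (MvPolynomial.aeval y)).comp
        (MvPolynomial.algebraTensorAlgEquiv (σ := ι) k K).symm.toAlgHom := by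
    ext; simp
  rw [hfactor]
  exact RingHom.Flat.comp (RingHom.Flat.of_bijective (AlgEquiv.bijective _))
    (RingHom.Flat.lTensor K (flat_aeval hy))

lemma exists_isPrime_comap_aeval_isMaximal {ι : Type*} {x : ι → K} {y : ι → L}
    (hx : AlgebraicIndependent k x) (hy : AlgebraicIndependent k y) :
    ∃ P : Ideal (K ⊗[k] L), P.IsPrime ∧ (P.comap (MvPolynomial.aeval fun i ↦ (1 : K) ⊗ₜ[k] y i :
      MvPolynomial ι K →ₐ[K] K ⊗[k] L).toRingHom).IsMaximal := by
  let : Algebra (MvPolynomial ι k) K := (MvPolynomial.aeval x).toAlgebra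
  let : Algebra (MvPolynomial ι k) L := (MvPolynomial.aeval y).toAlgebra
  have : IsScalarTower k (MvPolynomial ι k) K :=
    .of_algebraMap_eq' (AlgHom.comp_algebraMap (MvPolynomial.aeval x)).symm
  have : IsScalarTower k (MvPolynomial ι k) L :=
    .of_algebraMap_eq' (AlgHom.comp_algebraMap (MvPolynomial.aeval y)).symm
  -- On the quotient `K ⊗[k[X]] L` of `K ⊗[k] L`, in which `x i ⊗ 1 = 1 ⊗ y i`, the given map
  -- `K[X] → K ⊗[k] L` factors through evaluation at `x`.
  have : Nontrivial (K ⊗[MvPolynomial ι k] L) :=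
    Algebra.TensorProduct.nontrivial_of_algebraMap_injective_of_isDomain _ K L hx hy
  obtain ⟨Q, hQ⟩ := Ideal.exists_maximal (K ⊗[MvPolynomial ι k] L)
  have := hQ.isPrime
  let f := Algebra.TensorProduct.mapOfCompatibleSMul (MvPolynomial ι k) k K K L
  refine ⟨Q.comap f, Ideal.comap_isPrime _ _, ?_⟩
  let e : MvPolynomial ι K →ₐ[K] K := MvPolynomial.aeval x
  let g : MvPolynomial ι K →ₐ[K] K ⊗[k] L := MvPolynomial.aeval fun i ↦ (1 : K) ⊗ₜ[k] y i
  have hfg : f.comp g = (Algebra.ofId K (K ⊗[MvPolynomial ι k] L)).comp e := by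
    ext i
    have hxi : algebraMap (MvPolynomial ι k) K (.X i) = x i := MvPolynomial.aeval_X x i
    have hyi : algebraMap (MvPolynomial ι k) L (.X i) = y i := MvPolynomial.aeval_X y i
    simp [f, g, e, ← hxi, ← hyi, Algebra.algebraMap_eq_smul_one, Algebra.TensorProduct.one_def]
  have hle : RingHom.ker e ≤ Q.comap (f.comp g) := fun p hp ↦ by
    rw [Ideal.mem_comap, hfg, AlgHom.comp_apply, RingHom.mem_ker.mp hp, map_zero]
    exact Q.zero_mem
  have hker : (RingHom.ker e).IsMaximal := RingHom.ker_isMaximal_of_surjective e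
    fun c ↦ ⟨MvPolynomial.C c, MvPolynomial.aeval_C _ _⟩
  exact hker.eq_of_le (Ideal.comap_isPrime _ _).ne_top hle ▸ hker

lemma natCast_le_ringKrullDim_tensorProduct {n : ℕ} {x : Fin n → K} {y : Fin n → L}
    (hx : AlgebraicIndependent k x) (hy : AlgebraicIndependent k y) :
    n ≤ ringKrullDim (K ⊗[k] L) := by
  obtain ⟨P, hP, hmax⟩ := exists_isPrime_comap_aeval_isMaximal hx hy
  calc (n : WithBot ℕ∞)
    _ = ((P.comap (MvPolynomial.aeval fun i ↦ (1 : K) ⊗ₜ[k] y i :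
      MvPolynomial _ K →ₐ[K] K ⊗[k] L).toRingHom).height : WithBot ℕ∞) := by
      rw [height_mvPolynomial_eq_natCard, Nat.card_fin]; rfl
    _ ≤ P.height := WithBot.coe_le_coe.mpr <|
      height_comap_le_height_of_flat (flat_aeval_one_tmul hy) P
    _ ≤ ringKrullDim (K ⊗[k] L) := Ideal.height_le_ringKrullDim_of_ne_top hP.ne_top

variable (k K L)

theorem ringKrullDim_field_tensorProduct :
    ringKrullDim (K ⊗[k] L) =
      (min (Cardinal.toENat (Algebra.trdeg k K)) (Cardinal.toENat (Algebra.trdeg k L)) : ℕ∞) := by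
  apply le_antisymm
  · rw [WithBot.coe_min]
    refine le_min (ringKrullDim_tensorProduct_le_trdeg k K L) ?_
    rw [ringKrullDim_eq_of_ringEquiv (Algebra.TensorProduct.comm k K L).toRingEquiv]
    exact ringKrullDim_tensorProduct_le_trdeg k L K
  · obtain ⟨d, hd⟩ := WithBot.ne_bot_iff_exists.mp <|
      ne_bot_of_le_ne_bot WithBot.zero_ne_bot (ringKrullDim_nonneg_of_nontrivial (R := K ⊗[k] L))
    rw [← hd, WithBot.coe_le_coe, ← ENat.forall_natCast_le_iff_le]
    intro n hn
    obtain ⟨x, hx⟩ := exists_algebraicIndependent (hn.trans (min_le_left _ _))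
    obtain ⟨y, hy⟩ := exists_algebraicIndependent (hn.trans (min_le_right _ _))
    have := hd ▸ natCast_le_ringKrullDim_tensorProduct hx hy
    exact_mod_cast this

end FieldTensor

lemma IsPrecompletion.ringKrullDim_quotient {k A B E : Type*} [Field k] [CommRing A] [CommRing B]
    [CommRing E] [Algebra k A] [Algebra k B] {m M : Ideal A} {n N : Ideal B} [M.IsMaximal]
    [N.IsMaximal] {φ : A ⊗[k] B →+* E} (h : IsPrecompletion φ (tensorIdeal k m n)) (hM : m ≤ M)
    (hN : n ≤ N) : ringKrullDim (E ⧸ (tensorIdeal k M N).map φ) =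
      (min (Cardinal.toENat (Algebra.trdeg k (A ⧸ M)))
        (Cardinal.toENat (Algebra.trdeg k (B ⧸ N))) : ℕ∞) := by
  obtain ⟨e⟩ := h.nonempty_quotient_ringEquiv hM hN
  let := Ideal.Quotient.field M
  let := Ideal.Quotient.field N
  rw [← ringKrullDim_eq_of_ringEquiv e]
  exact ringKrullDim_field_tensorProduct k (A ⧸ M) (B ⧸ N)

lemma isMaximal_of_jacobson_bot_le {A : Type*} [CommRing A] [Finite (MaximalSpectrum A)]
    {P : Ideal A} (hP : P.IsPrime) (h : (⊥ : Ideal A).jacobson ≤ P) : P.IsMaximal := by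
  have := Fintype.ofFinite (MaximalSpectrum A)
  have hinf : Finset.univ.inf (MaximalSpectrum.asIdeal (R := A)) ≤ P := by
    refine le_trans (le_sInf fun M hM ↦ ?_) h
    exact Finset.inf_le (f := MaximalSpectrum.asIdeal) (Finset.mem_univ ⟨M, hM.2⟩)
  obtain ⟨M, -, hM⟩ := hP.inf_le'.mp hinf
  exact M.isMaximal.eq_of_le hP.ne_top hM ▸ M.isMaximal

lemma jacobson_bot_le {A : Type*} [CommRing A] (M : MaximalSpectrum A) :
    (⊥ : Ideal A).jacobson ≤ M.asIdeal :=
  sInf_le ⟨bot_le, M.isMaximal⟩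

lemma primeHeight_eq_height {R : Type*} [CommRing R] (P : Ideal R) [P.IsPrime] :
    primeHeight P = P.height :=
  IsLocalization.AtPrime.ringKrullDim_eq_height P _

theorem ringKrullDim_completedTensor_general {k A B E : Type*} [Field k] [CommRing A] [CommRing B]
    [CommRing E] [IsNoetherianRing A] [IsNoetherianRing B] [IsNoetherianRing E] [Algebra k A]
    [Algebra k B] {m : Ideal A} {n : Ideal B}
    (hm : ∀ {P : Ideal A}, P.IsPrime → m ≤ P → P.IsMaximal)
    (hn : ∀ {P : Ideal B}, P.IsPrime → n ≤ P → P.IsMaximal) {φ : A ⊗[k] B →+* E}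
    (h : IsPrecompletion φ (tensorIdeal k m n)) :
    ringKrullDim E =
      ⨆ (MN : MaximalSpectrum A × MaximalSpectrum B) (_ : m ≤ MN.1.asIdeal)
        (_ : n ≤ MN.2.asIdeal),
        ((MN.1.asIdeal.height + MN.2.asIdeal.height : ℕ∞) +
          (min (Cardinal.toENat (Algebra.trdeg k (A ⧸ MN.1.asIdeal)))
            (Cardinal.toENat (Algebra.trdeg k (B ⧸ MN.2.asIdeal))) : ℕ∞) : WithBot ℕ∞) := by
  apply le_antisymm
  · rw [ringKrullDim_le_iff_isMaximal_height_le]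
    intro P hP
    have := hP.isPrime
    have hmnP : tensorIdeal k m n ≤ P.comap φ :=
      Ideal.map_le_iff_le_comap.mp (h.map_le_jacobson.trans (jacobson_bot_le ⟨P, hP⟩))
    obtain ⟨hmP, hnP⟩ := sup_le_iff.mp hmnP
    rw [Ideal.map_le_iff_le_comap] at hmP hnP
    have hM := hm (Ideal.comap_isPrime _ _) hmP
    have hN := hn (Ideal.comap_isPrime _ _) hnP
    have hMNP : (tensorIdeal k _ _).map φ ≤ P :=
      Ideal.map_le_iff_le_comap.mpr (sup_le Ideal.map_comap_le Ideal.map_comap_le)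
    refine le_iSup₂_of_le (⟨_, hM⟩, ⟨_, hN⟩) hmP (le_iSup_of_le hnP ?_)
    rw [← h.ringKrullDim_quotient hmP hnP]
    exact height_le_add_ringKrullDim_quotient (fun Q _ ↦ h.height_comap_mk _ _ Q) hMNP
  · refine iSup_le fun (M, N) ↦ iSup₂_le fun hM hN ↦ ?_
    rw [← h.ringKrullDim_quotient hM hN]
    exact add_ringKrullDim_quotient_le fun Q _ ↦ h.height_comap_mk _ _ Q

/-- Let `A` and `B` be two semilocal Noetherian commutative rings
containing a field `k` such that `A ⊗̂[k] B` is Noetherian, with maximal ideals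
`m_1, …, m_p` of `A` and `n_1, …, n_q` of `B`. Then
`dim (A ⊗̂[k] B) = sup_{r,s} { ht m_r + ht n_s + min (trdeg_k A/m_r, trdeg_k B/n_s) }`. -/
theorem ringKrullDim_completedTensor (k A B : Type*) [Field k]
    [CommRing A] [CommRing B] [IsNoetherianRing A] [IsNoetherianRing B]
    [Algebra k A] [Algebra k B]
    [Finite (MaximalSpectrum A)] [Finite (MaximalSpectrum B)]
    (hE : IsNoetherianRing (CompletedTensor k A B)) :
    ringKrullDim (CompletedTensor k A B) =
      ⨆ pq : MaximalSpectrum A × MaximalSpectrum B,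
        (primeHeight pq.1.asIdeal + primeHeight pq.2.asIdeal +
          (min (trdeg' k (A ⧸ pq.1.asIdeal)) (trdeg' k (B ⧸ pq.2.asIdeal)) : ℕ∞)) := by
  have h : IsPrecompletion (algebraMap _ (CompletedTensor k A B)) _ := .algebraMap_adicCompletion
    (tensorIdeal_fg (IsNoetherian.noetherian _) (IsNoetherian.noetherian _))
  rw [ringKrullDim_completedTensor_general isMaximal_of_jacobson_bot_le
    isMaximal_of_jacobson_bot_le h]
  simp only [jacobson_bot_le, iSup_pos, primeHeight_eq_height, WithBot.coe_add]
  rfl
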